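/- Let Ω ⊆ ℝⁿ (n ≥ 1) be a bounded open set and s > 0 with n + 2s > 2. Let u₁ : ℝⁿ → ℝ be smooth and compactly supported in Ω, let λ₁ > 0, and assume ∫_{ℝⁿ} |y|^{2(s−1)} |F[u₁](y)|² dy ≤ λ₁^{(s−1)/s}. Then, with x_1, …, x_n the standard coordinate functions on ℝⁿ, Σ_{i=1}^{n} ∫_Ω ½[ 2x_i · (-Δ)^s|_Ω(x_i u₁) − x_i² · (-Δ)^s|_Ω u₁ − (-Δ)^s|_Ω(x_i² u₁) ] · u₁ dx ≤ s(n + 2s − 2) λ₁^{(s−1)/s}. -/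

import Mathlib

/-!
The inequality is an equality followed by the spectral hypothesis. Write `F` for the unitary Fourier
transform and `u` for `u₁`. Since `u` is supported in `Ω`, the characteristic function plays no role
and Parseval (`integral_fracLap_mul`) turns `∫ (-Δ)^s|_Ω f · a` into
`∫ |y|^{2s} Re (conj (F a) · F f)`. As `F (x_i f) = i ∂_i (F f)`, the contribution of the `i`-th
coordinate becomes

  `∫ |y|^{2s} (|∂_i F u|² + Re (conj (F u) · ∂_i² F u)) = ½ ∫ |y|^{2s} ∂_i² |F u|²`

(`integral_theta2`). Summing over `i` and moving the Laplacian onto the weight, with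
`Δ |y|^{2s} = 2s(n + 2s - 2) |y|^{2s-2}` (`sum_integral_norm_rpow_mul_lineDeriv`), gives exactly
`s(n + 2s - 2) ∫ |y|^{2(s-1)} |F u|²`, and the coefficient is positive because `n + 2s > 2`.

The weight `|y|^{2s}` need not be smooth at the origin, so the integration by parts is carried out
for `(ε + |y|²)^s`, which has temperate growth, and `ε → 0⁺` by dominated convergence. The condition
`n + 2s > 2` is also what makes the dominating function `|y|^{2s-2}` locally integrable.
-/

open MeasureTheory Real Complex
open scoped RealInnerProductSpace

/-- The unitary Fourier transform on `ℝⁿ`: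
`F[u](y) = (2π)^{-n/2} ∫ e^{-i⟨x,y⟩} u(x) dx`. -/
noncomputable def fourierT (n : ℕ) (u : EuclideanSpace ℝ (Fin n) → ℂ)
    (y : EuclideanSpace ℝ (Fin n)) : ℂ :=
  (((2 * Real.pi) ^ (-(n : ℝ) / 2) : ℝ) : ℂ) *
    ∫ x : EuclideanSpace ℝ (Fin n), Complex.exp (-(Complex.I * ((⟪x, y⟫ : ℝ) : ℂ))) * u x

/-- The inverse unitary Fourier transform on `ℝⁿ`:
`F⁻¹[w](x) = (2π)^{-n/2} ∫ e^{i⟨x,y⟩} w(y) dy`. -/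
noncomputable def invFourierT (n : ℕ) (w : EuclideanSpace ℝ (Fin n) → ℂ)
    (x : EuclideanSpace ℝ (Fin n)) : ℂ :=
  (((2 * Real.pi) ^ (-(n : ℝ) / 2) : ℝ) : ℂ) *
    ∫ y : EuclideanSpace ℝ (Fin n), Complex.exp (Complex.I * ((⟪x, y⟫ : ℝ) : ℂ)) * w y

/-- The fractional Laplacian restricted to `Ω`:
`((-Δ)^s|_Ω f)(x) = F⁻¹[y ↦ |y|^{2s} F[f·χ_Ω](y)](x)` (real part; the expression is
real-valued for real `f`). -/
noncomputable def fracLap {n : ℕ} (s : ℝ) (Ω : Set (EuclideanSpace ℝ (Fin n)))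
    (f : EuclideanSpace ℝ (Fin n) → ℝ) (x : EuclideanSpace ℝ (Fin n)) : ℝ :=
  (invFourierT n (fun y => ((‖y‖ ^ (2 * s) : ℝ) : ℂ) *
      fourierT n (fun z => ((Ω.indicator f z : ℝ) : ℂ)) y) x).re

open scoped SchwartzMap LineDeriv ContDiff

/-! ### The regularized weight `(ε + |x|²)^a` -/

section Weights

variable {E : Type*} [NormedAddCommGroup E] [InnerProductSpace ℝ E]

/-- Reduces to `ε = 1` by the dilation `x ↦ x / √ε`. -/
lemma hasTemperateGrowth_eps_rpow {ε : ℝ} (hε : 0 < ε) (a : ℝ) :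
    (fun x : E => (ε + ‖x‖ ^ 2) ^ a).HasTemperateGrowth := by
  have h1 : (fun x : E => (1 + ‖x‖ ^ 2) ^ a).HasTemperateGrowth :=
    Function.hasTemperateGrowth_one_add_norm_sq_rpow E a
  have h2 : (fun x : E => ((√ε)⁻¹ • ContinuousLinearMap.id ℝ E) x).HasTemperateGrowth :=
    ContinuousLinearMap.hasTemperateGrowth _
  have h3 := (Function.HasTemperateGrowth.const (E := E) (ε ^ a)).mul (h1.comp h2)
  refine (congrArg Function.HasTemperateGrowth (funext fun x => ?_)).mp h3
  simp only [Pi.mul_apply, Function.comp_apply, smul_apply,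
    ContinuousLinearMap.id_apply, norm_smul, norm_inv, Real.norm_eq_abs,
    abs_of_nonneg (Real.sqrt_nonneg ε), mul_pow, inv_pow, Real.sq_sqrt hε.le]
  rw [← Real.mul_rpow hε.le (by positivity)]
  congr 1
  field_simp

lemma hasLineDerivAt_eps_rpow {ε : ℝ} (hε : 0 < ε) (a : ℝ) (m x : E) :
    HasLineDerivAt ℝ (fun x : E => (ε + ‖x‖ ^ 2) ^ a)
      (2 * a * (⟪x, m⟫ * (ε + ‖x‖ ^ 2) ^ (a - 1))) x m := by
  have h1 : HasFDerivAt (fun x : E => ε + ‖x‖ ^ 2) (2 • innerSL ℝ x) x :=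
    (hasStrictFDerivAt_norm_sq x).hasFDerivAt.const_add ε
  have h2 := h1.rpow_const (p := a) (Or.inl (by positivity))
  convert! h2.hasLineDerivAt m using 1
  simp
  ring

lemma hasLineDerivAt_lineDeriv_eps_rpow {ε : ℝ} (hε : 0 < ε) (a : ℝ) (m x : E) :
    HasLineDerivAt ℝ (fun x : E => 2 * a * (⟪x, m⟫ * (ε + ‖x‖ ^ 2) ^ (a - 1)))
      (2 * a * (‖m‖ ^ 2 * (ε + ‖x‖ ^ 2) ^ (a - 1)
        + 2 * (a - 1) * (⟪x, m⟫ ^ 2 * (ε + ‖x‖ ^ 2) ^ (a - 2)))) x m := by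
  have h1 := hasLineDerivAt_eps_rpow hε (a - 1) m x
  have h2 : HasLineDerivAt ℝ (fun x : E => ⟪x, m⟫) (‖m‖ ^ 2) x m := by
    have := ((innerSL ℝ).flip m).hasFDerivAt (x := x) |>.hasLineDerivAt m
    convert! this using 1
    exact (real_inner_self_eq_norm_sq m).symm
  unfold HasLineDerivAt at *
  have h3 := (h2.mul h1).const_mul (2 * a)
  convert! h3 using 1
  rw [show a - 2 = a - 1 - 1 by ring]
  simp only [zero_smul, add_zero]
  ring

lemma inner_sq_le (x m : E) : ⟪x, m⟫ ^ 2 ≤ ‖m‖ ^ 2 * ‖x‖ ^ 2 := by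
  have := abs_real_inner_le_norm x m
  rw [← sq_abs, ← mul_pow, mul_comm]
  gcongr

variable [MeasurableSpace E] [BorelSpace E] [FiniteDimensional ℝ E]

lemma SchwartzMap.integrable_mul_of_temperate {w : E → ℝ} (hw : w.HasTemperateGrowth)
    (N : 𝓢(E, ℝ)) : Integrable (fun x => w x * N x) := by
  have := (SchwartzMap.smulLeftCLM ℝ w N).integrable (μ := volume)
  simpa [SchwartzMap.smulLeftCLM_apply hw] using this

/-- Integration by parts of a Schwartz function against a weight of temperate growth. -/
lemma integral_temperate_mul_lineDeriv {w w' : E → ℝ} (hw : w.HasTemperateGrowth)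
    (hw' : w'.HasTemperateGrowth) (m : E) (h : ∀ x, HasLineDerivAt ℝ w (w' x) x m)
    (N : 𝓢(E, ℝ)) : ∫ x, w x * (∂_{m} N) x = - ∫ x, w' x * N x := by
  have key := integral_bilinear_hasLineDerivAt_right_eq_neg_left_of_integrable
    (μ := (volume : Measure E)) (f := w) (f' := w') (g := N) (g' := fun x => (∂_{m} N) x) (v := m)
    (B := ContinuousLinearMap.mul ℝ ℝ)
    (by simpa using N.integrable_mul_of_temperate hw')
    (by simpa using (∂_{m} N).integrable_mul_of_temperate hw)
    (by simpa using N.integrable_mul_of_temperate hw)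
    (fun x _ => h x)
    (fun x _ => by
      rw [SchwartzMap.lineDerivOp_apply_eq_fderiv]
      exact (N.differentiableAt.hasFDerivAt).hasLineDerivAt m)
  simpa using key

lemma integral_eps_rpow_mul_lineDeriv_lineDeriv {ε : ℝ} (hε : 0 < ε) (a : ℝ) (m : E)
    (N : 𝓢(E, ℝ)) :
    ∫ x, (ε + ‖x‖ ^ 2) ^ a * (∂_{m} (∂_{m} N)) x =
      ∫ x, (2 * a * (‖m‖ ^ 2 * (ε + ‖x‖ ^ 2) ^ (a - 1)
        + 2 * (a - 1) * (⟪x, m⟫ ^ 2 * (ε + ‖x‖ ^ 2) ^ (a - 2)))) * N x := by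
  have t1 := hasTemperateGrowth_eps_rpow (E := E) hε a
  have t2 := hasTemperateGrowth_eps_rpow (E := E) hε (a - 1)
  have t3 := hasTemperateGrowth_eps_rpow (E := E) hε (a - 2)
  have ti := Function.hasTemperateGrowth_inner_left (H := E) m
  rw [integral_temperate_mul_lineDeriv t1 (by fun_prop) m (hasLineDerivAt_eps_rpow hε a m),
    integral_temperate_mul_lineDeriv (by fun_prop) (by fun_prop) m
      (hasLineDerivAt_lineDeriv_eps_rpow hε a m), neg_neg]

end Weights

/-! ### Passing to the homogeneous weight `|y|^{2s}` -/

section Limit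

open Filter Topology

variable {E : Type*} [NormedAddCommGroup E] [InnerProductSpace ℝ E] [MeasurableSpace E]
  [BorelSpace E] [FiniteDimensional ℝ E]

/-- `|x|^{2b}` is locally integrable when `2b > -dim`: in polar coordinates the radial integrand
near the origin is `r^{dim + 2b - 1}`. Away from the unit ball it has polynomial growth. -/
lemma integrable_norm_sq_rpow_mul (hd : 1 ≤ Module.finrank ℝ E) {b : ℝ}
    (hb : 0 < Module.finrank ℝ E + 2 * b) (N : 𝓢(E, ℝ)) :
    Integrable (fun x => (‖x‖ ^ 2) ^ b * N x) := by
  have : Nontrivial E := Module.finrank_pos_iff (R := ℝ).mp (by omega)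
  have hmeas : Measurable (fun x : E => (‖x‖ ^ 2) ^ b) := by fun_prop
  rw [← integrableOn_univ, ← Set.union_compl_self (Metric.ball (0 : E) 1)]
  refine IntegrableOn.union ?_ ?_
  · have h1 : IntegrableOn (fun x : E => (‖x‖ ^ 2) ^ b) (Metric.ball 0 1) := by
      have := (integrableOn_fun_norm_addHaar (volume : Measure E) (f := fun r => (r ^ 2) ^ b)
        (r := 1)).mpr ?_
      · exact this
      have h2 := (intervalIntegral.intervalIntegrable_rpow' (a := 0) (b := 1)
        (r := Module.finrank ℝ E + 2 * b - 1) (by linarith)).1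
      have h3 := h2.mono_set Set.Ioo_subset_Ioc_self
      refine h3.congr_fun (fun y hy => ?_) measurableSet_Ioo
      have hy0 : 0 < y := hy.1
      simp only [smul_eq_mul]
      rw [← Real.rpow_natCast y 2, ← Real.rpow_mul hy0.le, ← Real.rpow_natCast y (_ - 1),
        ← Real.rpow_add hy0]
      congr 1
      push_cast [Nat.cast_sub hd]
      ring
    obtain ⟨C, hC⟩ : ∃ C, ∀ x, ‖N x‖ ≤ C := by
      obtain ⟨C, -, hC⟩ := N.decay 0 0
      exact ⟨C, fun x => by simpa using hC x⟩
    exact Integrable.mul_bdd (c := C) h1 N.continuous.aestronglyMeasurable (ae_of_all _ hC)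
  · have h1 := (N.integrable_mul_of_temperate
      (hasTemperateGrowth_eps_rpow (E := E) one_pos |b|)).integrableOn
        (s := (Metric.ball (0 : E) 1)ᶜ)
    refine Integrable.mono h1 (hmeas.aestronglyMeasurable.mul N.continuous.aestronglyMeasurable) ?_
    refine (ae_restrict_iff' measurableSet_ball.compl).mpr (ae_of_all _ fun x hx => ?_)
    have hx1 : 1 ≤ ‖x‖ ^ 2 := by
      have : 1 ≤ ‖x‖ := by simpa using hx
      nlinarith
    rw [norm_mul, norm_mul]
    gcongr
    rw [Real.norm_of_nonneg (by positivity), Real.norm_of_nonneg (by positivity)]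
    calc (‖x‖ ^ 2) ^ b ≤ (‖x‖ ^ 2) ^ |b| := Real.rpow_le_rpow_of_exponent_le hx1 (le_abs_self b)
      _ ≤ (1 + ‖x‖ ^ 2) ^ |b| := by gcongr; linarith

/-- A bound uniform in `ε`, whatever the sign of `b`; it dominates the regularized weights. -/
lemma eps_rpow_le {ε R : ℝ} (hε : 0 < ε) (hε1 : ε ≤ 1) (hR : 0 < R) (b : ℝ) :
    (ε + R) ^ b ≤ R ^ b + (1 + R) ^ b := by
  have p1 : 0 ≤ R ^ b := by positivity
  have p2 : 0 ≤ (1 + R) ^ b := by positivity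
  rcases le_total 0 b with hb | hb
  · have : (ε + R) ^ b ≤ (1 + R) ^ b := by gcongr
    linarith
  · have : (ε + R) ^ b ≤ R ^ b := Real.rpow_le_rpow_of_nonpos hR (by linarith) hb
    linarith

/-- Pointwise bound for the second derivative of the weight, with `R = ‖x‖²`, `M = ‖m‖²` and
`q = ⟪x, m⟫²`; the case `ε = 0` covers the homogeneous weight. -/
lemma abs_second_deriv_le {R : ℝ} (hR : 0 < R) (s M q : ℝ) (hq : 0 ≤ q) (hqR : q ≤ M * R)
    (hM : 0 ≤ M) {ε : ℝ} (hε : 0 ≤ ε) :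
    |2 * s * (M * (ε + R) ^ (s - 1) + 2 * (s - 1) * (q * (ε + R) ^ (s - 2)))| ≤
      (|2 * s| * (M + |2 * (s - 1)| * M)) * (ε + R) ^ (s - 1) := by
  have hp : 0 < ε + R := by linarith
  have e : (ε + R) ^ (s - 1) = (ε + R) * (ε + R) ^ (s - 2) := by
    rw [show s - 1 = 1 + (s - 2) by ring, Real.rpow_add hp, Real.rpow_one]
  have h1 : q * (ε + R) ^ (s - 2) ≤ M * (ε + R) ^ (s - 1) := by
    rw [e, ← mul_assoc]
    gcongr
    exact hqR.trans (by gcongr; linarith)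
  have h0 : 0 ≤ q * (ε + R) ^ (s - 2) := by positivity
  rw [abs_mul, mul_assoc |2 * s|]
  refine mul_le_mul_of_nonneg_left ?_ (abs_nonneg _)
  refine (abs_add_le _ _).trans ?_
  rw [abs_mul (2 * (s - 1)), abs_of_nonneg h0,
    abs_of_nonneg (show 0 ≤ M * (ε + R) ^ (s - 1) by positivity), add_mul, mul_assoc |2 * (s - 1)|]
  gcongr

lemma ae_norm_sq_pos (hd : 1 ≤ Module.finrank ℝ E) : ∀ᵐ x : E, 0 < ‖x‖ ^ 2 := by
  have : Nontrivial E := Module.finrank_pos_iff (R := ℝ).mp (by omega)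
  filter_upwards [(volume : Measure E).ae_ne 0] with x hx
  positivity

lemma integrable_second_deriv_mul (hd : 1 ≤ Module.finrank ℝ E) {s : ℝ}
    (hs : 2 < Module.finrank ℝ E + 2 * s) (m : E) (N : 𝓢(E, ℝ)) :
    Integrable (fun x => (2 * s * (‖m‖ ^ 2 * (‖x‖ ^ 2) ^ (s - 1)
        + 2 * (s - 1) * (⟪x, m⟫ ^ 2 * (‖x‖ ^ 2) ^ (s - 2)))) * N x) := by
  have h := (integrable_norm_sq_rpow_mul hd (b := s - 1) (by linarith) N).const_mul
    (|2 * s| * (‖m‖ ^ 2 + |2 * (s - 1)| * ‖m‖ ^ 2))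
  refine h.mono (Measurable.aestronglyMeasurable ?_) ?_
  · have := N.continuous.measurable
    fun_prop
  · filter_upwards [ae_norm_sq_pos hd] with x hx
    have := abs_second_deriv_le hx s (‖m‖ ^ 2) (⟪x, m⟫ ^ 2) (by positivity) (inner_sq_le x m)
      (by positivity) le_rfl
    simp only [zero_add] at this
    rw [norm_mul _ (N x), ← mul_assoc (|2 * s| * _), norm_mul _ (N x)]
    refine mul_le_mul_of_nonneg_right ?_ (norm_nonneg _)
    exact this.trans (le_abs_self _)

/-- Double integration by parts against the weight `|x|^{2s}`, whose second derivatives are singular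
at the origin: the limit `ε → 0⁺` of the identity for the smooth weight `(ε + |x|²)^s`. -/
lemma integral_norm_rpow_mul_lineDeriv_lineDeriv (hd : 1 ≤ Module.finrank ℝ E) {s : ℝ}
    (hs0 : 0 < s) (hs : 2 < Module.finrank ℝ E + 2 * s) (m : E) (N : 𝓢(E, ℝ)) :
    ∫ x, (‖x‖ ^ 2) ^ s * (∂_{m} (∂_{m} N)) x =
      ∫ x, (2 * s * (‖m‖ ^ 2 * (‖x‖ ^ 2) ^ (s - 1)
        + 2 * (s - 1) * (⟪x, m⟫ ^ 2 * (‖x‖ ^ 2) ^ (s - 2)))) * N x := by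
  have hlim : ∀ (x : E) (_ : 0 < ‖x‖ ^ 2) (b : ℝ),
      Tendsto (fun ε : ℝ => (ε + ‖x‖ ^ 2) ^ b) (𝓝[>] 0) (𝓝 ((‖x‖ ^ 2) ^ b)) := by
    intro x hx b
    have : ContinuousAt (fun ε : ℝ => (ε + ‖x‖ ^ 2) ^ b) 0 := by
      refine ContinuousAt.rpow_const (by fun_prop) (Or.inl ?_)
      simpa using hx.ne'
    simpa using this.tendsto.mono_left nhdsWithin_le_nhds
  have hε : ∀ᶠ ε : ℝ in 𝓝[>] 0, 0 < ε ∧ ε ≤ 1 := by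
    filter_upwards [Ioc_mem_nhdsGT (zero_lt_one (α := ℝ))] with ε h using h
  have L : Tendsto (fun ε : ℝ => ∫ x, (ε + ‖x‖ ^ 2) ^ s * (∂_{m} (∂_{m} N)) x) (𝓝[>] 0)
      (𝓝 (∫ x, (‖x‖ ^ 2) ^ s * (∂_{m} (∂_{m} N)) x)) := by
    refine tendsto_integral_filter_of_dominated_convergence
      (fun x => ‖(‖x‖ ^ 2) ^ s * (∂_{m} (∂_{m} N)) x‖
        + ‖(1 + ‖x‖ ^ 2) ^ s * (∂_{m} (∂_{m} N)) x‖) ?_ ?_ ?_ ?_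
    · refine Eventually.of_forall fun ε => Measurable.aestronglyMeasurable ?_
      have := (∂_{m} (∂_{m} N)).continuous.measurable
      fun_prop
    · filter_upwards [hε] with ε ⟨h0, h1⟩
      filter_upwards [ae_norm_sq_pos hd] with x hx
      rw [norm_mul, norm_mul, norm_mul, ← add_mul]
      gcongr
      rw [Real.norm_of_nonneg (by positivity), Real.norm_of_nonneg (by positivity),
        Real.norm_of_nonneg (by positivity)]
      exact eps_rpow_le h0 h1 hx s
    · exact (integrable_norm_sq_rpow_mul hd (by linarith) _).norm.add
        (SchwartzMap.integrable_mul_of_temperate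
          (hasTemperateGrowth_eps_rpow one_pos s) _).norm
    · filter_upwards [ae_norm_sq_pos hd] with x hx
      exact (hlim x hx s).mul_const _
  have R : Tendsto (fun ε : ℝ => ∫ x, (2 * s * (‖m‖ ^ 2 * (ε + ‖x‖ ^ 2) ^ (s - 1)
        + 2 * (s - 1) * (⟪x, m⟫ ^ 2 * (ε + ‖x‖ ^ 2) ^ (s - 2)))) * N x) (𝓝[>] 0)
      (𝓝 (∫ x, (2 * s * (‖m‖ ^ 2 * (‖x‖ ^ 2) ^ (s - 1)
        + 2 * (s - 1) * (⟪x, m⟫ ^ 2 * (‖x‖ ^ 2) ^ (s - 2)))) * N x)) := by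
    refine tendsto_integral_filter_of_dominated_convergence
      (fun x => (|2 * s| * (‖m‖ ^ 2 + |2 * (s - 1)| * ‖m‖ ^ 2)) *
        (‖(‖x‖ ^ 2) ^ (s - 1) * N x‖ + ‖(1 + ‖x‖ ^ 2) ^ (s - 1) * N x‖)) ?_ ?_ ?_ ?_
    · refine Eventually.of_forall fun ε => Measurable.aestronglyMeasurable ?_
      have := N.continuous.measurable
      fun_prop
    · filter_upwards [hε] with ε ⟨h0, h1⟩
      filter_upwards [ae_norm_sq_pos hd] with x hx
      have := abs_second_deriv_le hx s (‖m‖ ^ 2) (⟪x, m⟫ ^ 2) (by positivity) (inner_sq_le x m)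
        (by positivity) h0.le
      rw [norm_mul _ (N x), norm_mul _ (N x), norm_mul _ (N x), ← add_mul,
        ← mul_assoc (|2 * s| * _)]
      refine mul_le_mul_of_nonneg_right ?_ (norm_nonneg _)
      refine this.trans ?_
      rw [Real.norm_of_nonneg (by positivity), Real.norm_of_nonneg (by positivity)]
      gcongr
      exact eps_rpow_le h0 h1 hx _
    · exact ((integrable_norm_sq_rpow_mul hd (by linarith) _).norm.add
        (SchwartzMap.integrable_mul_of_temperate
          (hasTemperateGrowth_eps_rpow one_pos (s - 1)) _).norm).const_mul _
    · filter_upwards [ae_norm_sq_pos hd] with x hx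
      exact ((((hlim x hx _).const_mul _).add
        (((hlim x hx _).const_mul _).const_mul _)).const_mul _).mul_const _
  refine tendsto_nhds_unique L (R.congr' ?_)
  filter_upwards [hε] with ε h
  exact (integral_eps_rpow_mul_lineDeriv_lineDeriv h.1 s m N).symm

/-- `∫ |x|^{2s} ΔN = ∫ Δ(|x|^{2s}) N`, with `Δ|x|^{2s} = 2s(dim + 2s - 2)|x|^{2s-2}`. -/
lemma sum_integral_norm_rpow_mul_lineDeriv {ι : Type*} [Fintype ι] (B : OrthonormalBasis ι ℝ E)
    (hd : 1 ≤ Module.finrank ℝ E) {s : ℝ}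
    (hs0 : 0 < s) (hs : 2 < Module.finrank ℝ E + 2 * s) (N : 𝓢(E, ℝ)) :
    ∑ i, ∫ x, (‖x‖ ^ 2) ^ s * (∂_{B i} (∂_{B i} N)) x =
      2 * s * (Module.finrank ℝ E + 2 * s - 2) * ∫ x, (‖x‖ ^ 2) ^ (s - 1) * N x := by
  simp_rw [integral_norm_rpow_mul_lineDeriv_lineDeriv hd hs0 hs]
  rw [← integral_finsetSum _ fun i _ => integrable_second_deriv_mul hd hs (B i) N,
    ← integral_const_mul]
  refine integral_congr_ae ?_
  filter_upwards [ae_norm_sq_pos hd] with x hx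
  have e : (‖x‖ ^ 2) ^ (s - 1) = (‖x‖ ^ 2) * (‖x‖ ^ 2) ^ (s - 2) := by
    rw [show s - 1 = 1 + (s - 2) by ring, Real.rpow_add hx, Real.rpow_one]
  have hsum : ∑ i, ⟪x, B i⟫ ^ 2 = ‖x‖ ^ 2 := by
    simpa using B.sum_sq_norm_inner_left x
  rw [← Finset.sum_mul, ← Finset.mul_sum, Finset.sum_add_distrib, ← Finset.mul_sum,
    ← Finset.sum_mul, ← Finset.sum_mul, hsum, ← e]
  simp only [B.norm_eq_one, one_pow, Finset.sum_const, Finset.card_univ, nsmul_eq_mul,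
    Module.finrank_eq_card_basis B.toBasis]
  ring

end Limit

/-! ### The unitary Fourier transform on Schwartz functions -/

section Fourier

open scoped FourierTransform

variable {n : ℕ}

/-- The dilation `y ↦ y / 2π` of `ℝⁿ`, relating the two normalizations of the frequency. -/
noncomputable def freqScale (n : ℕ) :
    EuclideanSpace ℝ (Fin n) ≃L[ℝ] EuclideanSpace ℝ (Fin n) :=
  ContinuousLinearEquiv.smulLeft (Units.mk0 ((2 * Real.pi)⁻¹ : ℝ) (by positivity))

lemma freqScale_apply (y : EuclideanSpace ℝ (Fin n)) : freqScale n y = (2 * Real.pi)⁻¹ • y := rfl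

/-- The unitary Fourier transform `fourierT` as a map of Schwartz functions, obtained by rescaling
Mathlib's Fourier transform `𝓕 f w = ∫ e^{-2πi⟨x,w⟩} f(x) dx`. -/
noncomputable def schwartzT (f : 𝓢(EuclideanSpace ℝ (Fin n), ℂ)) :
    𝓢(EuclideanSpace ℝ (Fin n), ℂ) :=
  (((2 * Real.pi) ^ (-(n : ℝ) / 2) : ℝ) : ℂ) •
    SchwartzMap.compCLMOfContinuousLinearEquiv ℂ (freqScale n) (𝓕 f)

lemma schwartzT_apply (f : 𝓢(EuclideanSpace ℝ (Fin n), ℂ)) (y : EuclideanSpace ℝ (Fin n)) :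
    schwartzT f y = fourierT n f y := by
  simp only [schwartzT, fourierT, smul_apply,
    SchwartzMap.compCLMOfContinuousLinearEquiv_apply, Function.comp_apply, smul_eq_mul]
  rw [SchwartzMap.fourier_coe, Real.fourier_eq']
  congr 1
  refine integral_congr_ae (ae_of_all _ fun x => ?_)
  simp only [smul_eq_mul, freqScale_apply, inner_smul_right]
  congr 2
  push_cast
  have : (Real.pi : ℂ) ≠ 0 := by exact_mod_cast Real.pi_ne_zero
  field_simp

lemma schwartzT_smul (c : ℂ) (f : 𝓢(EuclideanSpace ℝ (Fin n), ℂ)) :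
    schwartzT (c • f) = c • schwartzT f := by
  simp only [schwartzT, FourierTransform.fourier_smul, map_smul]
  rw [smul_comm]

/-- Differentiation on the Fourier side is multiplication by `-i⟨x, m⟩` on the space side. -/
lemma lineDeriv_schwartzT (f : 𝓢(EuclideanSpace ℝ (Fin n), ℂ)) (m : EuclideanSpace ℝ (Fin n)) :
    ∂_{m} (schwartzT f) =
      (-Complex.I) • schwartzT (SchwartzMap.smulLeftCLM ℂ (fun x => ⟪x, m⟫) f) := by
  rw [← schwartzT_smul]
  simp only [schwartzT]
  rw [LineDeriv.lineDerivOp_smul, SchwartzMap.lineDerivOp_compCLMOfContinuousLinearEquiv,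
    freqScale_apply, LineDeriv.lineDerivOp_left_smul, SchwartzMap.lineDerivOp_fourier_eq]
  simp only [FourierTransform.fourier_smul, map_smul]
  congr 1
  ext y
  have : (Real.pi : ℂ) ≠ 0 := by exact_mod_cast Real.pi_ne_zero
  simp
  field_simp

lemma integrable_exp_mul_prod (a : EuclideanSpace ℝ (Fin n) → ℝ)
    (g : EuclideanSpace ℝ (Fin n) → ℂ) (ha : Integrable a) (hg : Integrable g) :
    Integrable (fun p : EuclideanSpace ℝ (Fin n) × EuclideanSpace ℝ (Fin n) =>
      Complex.exp (Complex.I * ((⟪p.1, p.2⟫ : ℝ) : ℂ)) * ((a p.1 : ℂ) * g p.2))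
      (volume.prod volume) := by
  refine Integrable.bdd_mul (c := 1) (ha.ofReal.mul_prod hg) ?_ ?_
  · exact (Continuous.aestronglyMeasurable (by fun_prop))
  · refine ae_of_all _ fun p => ?_
    rw [mul_comm, Complex.norm_exp_ofReal_mul_I]

/-- Parseval's identity, by Fubini: `∫ Re (F⁻¹ g) · a = Re ∫ g · conj (F a)` for real `a`,
together with the integrability of the left-hand side. -/
lemma invFourierT_parseval (a : EuclideanSpace ℝ (Fin n) → ℝ)
    (g : EuclideanSpace ℝ (Fin n) → ℂ) (ha : Integrable a) (hg : Integrable g) :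
    Integrable (fun x => (invFourierT n g x).re * a x) ∧
    ∫ x, (invFourierT n g x).re * a x =
      (∫ y, g y * (starRingEnd ℂ) (fourierT n (fun x => (a x : ℂ)) y)).re := by
  set c : ℂ := (((2 * Real.pi) ^ (-(n : ℝ) / 2) : ℝ) : ℂ) with hc
  have hc' : (starRingEnd ℂ) c = c := by rw [hc, Complex.conj_ofReal]
  have h := integrable_exp_mul_prod a g ha hg
  have e1 : ∀ x, invFourierT n g x * a x =
      c * ∫ y, Complex.exp (Complex.I * ((⟪x, y⟫ : ℝ) : ℂ)) * ((a x : ℂ) * g y) := by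
    intro x
    rw [invFourierT, mul_assoc, ← integral_mul_const]
    congr 1
    refine integral_congr_ae (ae_of_all _ fun y => ?_)
    ring
  have e2 : ∀ y, g y * (starRingEnd ℂ) (fourierT n (fun x => (a x : ℂ)) y) =
      c * ∫ x, Complex.exp (Complex.I * ((⟪x, y⟫ : ℝ) : ℂ)) * ((a x : ℂ) * g y) := by
    intro y
    rw [fourierT, map_mul, ← hc, hc', ← integral_conj, mul_left_comm, ← integral_const_mul]
    congr 1
    refine integral_congr_ae (ae_of_all _ fun x => ?_)
    simp only [map_mul, ← Complex.exp_conj, map_neg, Complex.conj_I, Complex.conj_ofReal, neg_mul,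
      neg_neg]
    ring
  have e3 : ∀ x, (invFourierT n g x).re * a x = (invFourierT n g x * a x).re := by
    intro x; simp
  have hi : Integrable (fun x => invFourierT n g x * a x) := by
    simp_rw [e1]
    exact h.integral_prod_left.const_mul _
  refine ⟨by simp_rw [e3]; exact hi.re, ?_⟩
  simp_rw [e3]
  rw [← RCLike.re_eq_complex_re]
  rw [integral_re hi]
  congr 1
  simp_rw [e1, e2]
  rw [integral_const_mul, integral_const_mul, integral_integral_swap h]

end Fourier

/-! ### The quadratic form on the Fourier side -/

section Energy

variable {n : ℕ}

/-- The real Schwartz function `⟪f, g⟫ = Re (conj f · g)` attached to complex Schwartz functions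
`f` and `g`. -/
noncomputable def realPair (f g : 𝓢(EuclideanSpace ℝ (Fin n), ℂ)) :
    𝓢(EuclideanSpace ℝ (Fin n), ℝ) :=
  SchwartzMap.pairing (innerSL ℝ) f g

lemma realPair_apply (f g : 𝓢(EuclideanSpace ℝ (Fin n), ℂ)) (y : EuclideanSpace ℝ (Fin n)) :
    realPair f g y = ⟪f y, g y⟫ := rfl

lemma lineDeriv_realPair_apply (f g : 𝓢(EuclideanSpace ℝ (Fin n), ℂ))
    (m x : EuclideanSpace ℝ (Fin n)) :
    (∂_{m} (realPair f g)) x = ⟪f x, (∂_{m} g) x⟫ + ⟪(∂_{m} f) x, g x⟫ := by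
  simp only [SchwartzMap.lineDerivOp_apply_eq_fderiv]
  exact fderiv_inner_apply ℝ f.differentiableAt g.differentiableAt m

lemma lineDeriv_realPair (f g : 𝓢(EuclideanSpace ℝ (Fin n), ℂ))
    (m : EuclideanSpace ℝ (Fin n)) :
    ∂_{m} (realPair f g) = realPair f (∂_{m} g) + realPair (∂_{m} f) g := by
  ext x
  exact lineDeriv_realPair_apply f g m x

/-- Second derivatives of `|F u|²`: `½ ∂²|F u|² = |F(x u)|² - Re (conj (F u) · F(x² u))`. -/
lemma half_lineDeriv_lineDeriv_realPair (U : 𝓢(EuclideanSpace ℝ (Fin n), ℂ))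
    (m y : EuclideanSpace ℝ (Fin n)) :
    (1 / 2 : ℝ) * (∂_{m} (∂_{m} (realPair (schwartzT U) (schwartzT U)))) y =
      realPair (schwartzT (SchwartzMap.smulLeftCLM ℂ (fun x => ⟪x, m⟫) U))
          (schwartzT (SchwartzMap.smulLeftCLM ℂ (fun x => ⟪x, m⟫) U)) y
        - (1 / 2) * realPair (schwartzT (SchwartzMap.smulLeftCLM ℂ (fun x => ⟪x, m⟫)
            (SchwartzMap.smulLeftCLM ℂ (fun x => ⟪x, m⟫) U))) (schwartzT U) y
        - (1 / 2) * realPair (schwartzT U) (schwartzT (SchwartzMap.smulLeftCLM ℂ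
            (fun x => ⟪x, m⟫) (SchwartzMap.smulLeftCLM ℂ (fun x => ⟪x, m⟫) U))) y := by
  -- Each derivative produces a factor `-i`: two of them give `|-i|² = 1` when they fall on
  -- different entries of the inner product, and `(-i)² = -1` when they fall on the same one.
  simp only [lineDeriv_realPair, LineDeriv.lineDerivOp_add, add_apply, realPair_apply,
    lineDeriv_schwartzT, LineDeriv.lineDerivOp_smul, smul_apply, Complex.inner]
  simp
  ring

lemma integrable_rpow_mul_complex {s : ℝ} (hs : 0 < s) (f : 𝓢(EuclideanSpace ℝ (Fin n), ℂ)) :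
    Integrable (fun y => ((‖y‖ ^ (2 * s) : ℝ) : ℂ) * f y) := by
  have ht := hasTemperateGrowth_eps_rpow (E := EuclideanSpace ℝ (Fin n)) one_pos s
  have h := (SchwartzMap.smulLeftCLM ℂ (fun y : EuclideanSpace ℝ (Fin n) => (1 + ‖y‖ ^ 2) ^ s)
    f).integrable (μ := volume)
  refine h.mono (Measurable.aestronglyMeasurable ?_) (ae_of_all _ fun y => ?_)
  · have := f.continuous.measurable
    fun_prop
  · rw [SchwartzMap.smulLeftCLM_apply_apply ht, norm_mul, norm_smul]
    gcongr
    rw [Complex.norm_real, Real.norm_of_nonneg (by positivity), Real.norm_of_nonneg (by positivity),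
      show ‖y‖ ^ (2 * s) = (‖y‖ ^ 2) ^ s from mod_cast Real.rpow_natCast_mul (norm_nonneg y) 2 s]
    gcongr
    linarith

/-- The bilinear energy form of the restricted fractional Laplacian on the Fourier side:
`∫ (-Δ)^s|_Ω f · a = ∫ |y|^{2s} Re (conj (F a) · F f)` for `f` vanishing off `Ω`. -/
lemma integral_fracLap_mul {s : ℝ} (hs : 0 < s) (Ω : Set (EuclideanSpace ℝ (Fin n)))
    (a f : EuclideanSpace ℝ (Fin n) → ℝ) (A F : 𝓢(EuclideanSpace ℝ (Fin n), ℂ))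
    (hA : ∀ x, A x = (a x : ℂ)) (hF : ∀ x, F x = (f x : ℂ)) (hfΩ : ∀ x ∉ Ω, f x = 0) :
    Integrable (fun x => fracLap s Ω f x * a x) ∧
    ∫ x, fracLap s Ω f x * a x =
      ∫ y, (‖y‖ ^ 2) ^ s * realPair (schwartzT A) (schwartzT F) y := by
  have hind : Ω.indicator f = f := by
    rw [Set.indicator_eq_self]
    intro x hx
    by_contra h
    exact hx (hfΩ x h)
  have hg := integrable_rpow_mul_complex hs (schwartzT F)
  have hfl : ∀ x, fracLap s Ω f x =
      (invFourierT n (fun y => ((‖y‖ ^ (2 * s) : ℝ) : ℂ) * schwartzT F y) x).re := by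
    intro x
    rw [fracLap, hind]
    simp only [schwartzT_apply]
    rw [show (F : EuclideanSpace ℝ (Fin n) → ℂ) = fun z => (f z : ℂ) from funext hF]
  have ha : Integrable a := by
    have := (A.integrable (μ := volume)).re
    refine this.congr (ae_of_all _ fun x => ?_)
    simp [hA]
  obtain ⟨h1, h2⟩ := invFourierT_parseval a _ ha hg
  simp_rw [hfl]
  refine ⟨h1, h2.trans ?_⟩
  have hT : ∀ y, fourierT n (fun x => (a x : ℂ)) y = schwartzT A y := by
    intro y
    rw [schwartzT_apply, show (A : EuclideanSpace ℝ (Fin n) → ℂ) = fun z => (a z : ℂ) from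
      funext hA]
  simp_rw [hT]
  have hi : Integrable (fun y => ((‖y‖ ^ (2 * s) : ℝ) : ℂ) * schwartzT F y *
      (starRingEnd ℂ) (schwartzT A y)) := by
    obtain ⟨C, -, hC⟩ := (schwartzT A).decay 0 0
    refine Integrable.mul_bdd (c := C) hg (Continuous.aestronglyMeasurable ?_)
      (ae_of_all _ fun y => ?_)
    · exact Complex.continuous_conj.comp (schwartzT A).continuous
    · simpa using hC y
  rw [← RCLike.re_eq_complex_re, ← integral_re hi]
  refine integral_congr_ae (ae_of_all _ fun y => ?_)
  have e : ‖y‖ ^ (2 * s) = (‖y‖ ^ 2) ^ s := mod_cast Real.rpow_natCast_mul (norm_nonneg y) 2 s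
  simp only [realPair_apply, Complex.inner, RCLike.re_eq_complex_re, e, mul_assoc,
    Complex.re_ofReal_mul]

lemma integral_sub_half_sub_half {X : Type*} [MeasurableSpace X] {μ : Measure X} {f g h : X → ℝ}
    (hf : Integrable f μ) (hg : Integrable g μ) (hh : Integrable h μ) :
    ∫ x, (f x - (1 / 2) * g x - (1 / 2) * h x) ∂μ =
      ∫ x, f x ∂μ - (1 / 2) * ∫ x, g x ∂μ - (1 / 2) * ∫ x, h x ∂μ := by
  have hg' := hg.const_mul (1 / 2)
  have hh' := hh.const_mul (1 / 2)
  have hfg : Integrable (fun x => f x - (1 / 2) * g x) μ := hf.sub hg'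
  rw [integral_sub hfg hh', integral_sub hf hg', integral_const_mul, integral_const_mul]

/-- One coordinate direction: `∫_Ω Θ₂(x_i) u = ½ ∫ |y|^{2s} ∂_i²|F u|²`. -/
lemma integral_theta2 (hn : 1 ≤ n) {s : ℝ} (hs : 0 < s) (Ω : Set (EuclideanSpace ℝ (Fin n)))
    (u : EuclideanSpace ℝ (Fin n) → ℝ) (U : 𝓢(EuclideanSpace ℝ (Fin n), ℂ))
    (hU : ∀ x, U x = (u x : ℂ)) (huΩ : ∀ x ∉ Ω, u x = 0) (i : Fin n) :
    ∫ x in Ω, (1 / 2) * (2 * x i * fracLap s Ω (fun z => z i * u z) x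
          - (x i) ^ 2 * fracLap s Ω u x
          - fracLap s Ω (fun z => (z i) ^ 2 * u z) x) * u x =
      (1 / 2) * ∫ y, (‖y‖ ^ 2) ^ s * (∂_{EuclideanSpace.basisFun (Fin n) ℝ i}
        (∂_{EuclideanSpace.basisFun (Fin n) ℝ i}
          (realPair (schwartzT U) (schwartzT U)))) y := by
  set m := EuclideanSpace.basisFun (Fin n) ℝ i with hm
  have hin : ∀ x : EuclideanSpace ℝ (Fin n), ⟪x, m⟫ = x i := by
    intro x; simp [hm, EuclideanSpace.inner_single_right]
  have hd : 1 ≤ Module.finrank ℝ (EuclideanSpace ℝ (Fin n)) := by simpa using hn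
  have ht := Function.hasTemperateGrowth_inner_left (H := EuclideanSpace ℝ (Fin n)) m
  set U1 := SchwartzMap.smulLeftCLM ℂ (fun x => ⟪x, m⟫) U with hU1
  set U2 := SchwartzMap.smulLeftCLM ℂ (fun x => ⟪x, m⟫) U1 with hU2
  have e1 : ∀ x, U1 x = ((x i * u x : ℝ) : ℂ) := by
    intro x
    rw [hU1, SchwartzMap.smulLeftCLM_apply_apply ht, hin, hU]
    simp
  have e2 : ∀ x, U2 x = (((x i) ^ 2 * u x : ℝ) : ℂ) := by
    intro x
    rw [hU2, SchwartzMap.smulLeftCLM_apply_apply ht, hin, e1]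
    simp
    ring
  obtain ⟨i1, p1⟩ := integral_fracLap_mul hs Ω (fun z => z i * u z) (fun z => z i * u z) U1 U1
    e1 e1 (fun x hx => by simp [huΩ x hx])
  obtain ⟨i2, p2⟩ := integral_fracLap_mul hs Ω (fun z => (z i) ^ 2 * u z) u U2 U e2 hU huΩ
  obtain ⟨i3, p3⟩ := integral_fracLap_mul hs Ω u (fun z => (z i) ^ 2 * u z) U U2 hU e2
    (fun x hx => by simp [huΩ x hx])
  have hw : 0 < (Module.finrank ℝ (EuclideanSpace ℝ (Fin n)) : ℝ) + 2 * s := by positivity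
  have j1 := integrable_norm_sq_rpow_mul hd hw (realPair (schwartzT U1) (schwartzT U1))
  have j2 := integrable_norm_sq_rpow_mul hd hw (realPair (schwartzT U2) (schwartzT U))
  have j3 := integrable_norm_sq_rpow_mul hd hw (realPair (schwartzT U) (schwartzT U2))
  -- `u` vanishes off `Ω`, so every integral may be taken over `ℝⁿ`.
  rw [setIntegral_eq_integral_of_forall_compl_eq_zero (fun x hx => by simp [huΩ x hx])]
  calc _ = ∫ x, (fracLap s Ω (fun z => z i * u z) x * (x i * u x)
          - (1 / 2) * (fracLap s Ω u x * ((x i) ^ 2 * u x))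
          - (1 / 2) * (fracLap s Ω (fun z => (z i) ^ 2 * u z) x * u x)) :=
        integral_congr_ae (ae_of_all _ fun x => by ring)
    _ = ∫ y, ((‖y‖ ^ 2) ^ s * realPair (schwartzT U1) (schwartzT U1) y
          - (1 / 2) * ((‖y‖ ^ 2) ^ s * realPair (schwartzT U2) (schwartzT U) y)
          - (1 / 2) * ((‖y‖ ^ 2) ^ s * realPair (schwartzT U) (schwartzT U2) y)) := by
        rw [integral_sub_half_sub_half i1 i2 i3, integral_sub_half_sub_half j1 j2 j3, p1, p2, p3]
    _ = _ := by
        rw [← integral_const_mul]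
        refine integral_congr_ae (ae_of_all _ fun y => ?_)
        have := half_lineDeriv_lineDeriv_realPair U m y
        simp only [← hU1, ← hU2] at this
        linear_combination -((‖y‖ ^ 2) ^ s) * this

end Energy

/-- The paper's Lemma 3.1: if `∫ |y|^{2(s−1)} |F[u₁](y)|² dy ≤ λ₁^{(s−1)/s}` then
`Σ_i ∫_Ω Θ₂(x_i) u₁ dx ≤ s(n+2s−2) λ₁^{(s−1)/s}`. -/
theorem sum_theta2_coordinates_le {n : ℕ} (hn : 1 ≤ n) (s : ℝ) (hs : 0 < s)
    (hns : 2 < (n : ℝ) + 2 * s)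
    (Ω : Set (EuclideanSpace ℝ (Fin n))) (hΩo : IsOpen Ω) (hΩb : Bornology.IsBounded Ω)
    (u₁ : EuclideanSpace ℝ (Fin n) → ℝ)
    (hus : ContDiff ℝ (⊤ : ℕ∞) u₁) (huc : HasCompactSupport u₁) (huΩ : tsupport u₁ ⊆ Ω)
    (lam1 : ℝ) (hlam1 : 0 < lam1)
    (hF : ∫ y : EuclideanSpace ℝ (Fin n),
        ‖y‖ ^ (2 * (s - 1)) * ‖fourierT n (fun z => ((u₁ z : ℝ) : ℂ)) y‖ ^ 2
        ≤ lam1 ^ ((s - 1) / s)) :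
    ∑ i : Fin n, ∫ x in Ω,
        (1 / 2) * (2 * x i * fracLap s Ω (fun z => z i * u₁ z) x
          - (x i) ^ 2 * fracLap s Ω u₁ x
          - fracLap s Ω (fun z => (z i) ^ 2 * u₁ z) x) * u₁ x
      ≤ s * ((n : ℝ) + 2 * s - 2) * lam1 ^ ((s - 1) / s) := by
  have hU' : ContDiff ℝ ∞ (fun z => ((u₁ z : ℝ) : ℂ)) := Complex.ofRealCLM.contDiff.comp hus
  have hUc : HasCompactSupport (fun z => ((u₁ z : ℝ) : ℂ)) :=
    huc.comp_left (g := ((↑) : ℝ → ℂ)) Complex.ofReal_zero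
  set U : 𝓢(EuclideanSpace ℝ (Fin n), ℂ) := hUc.toSchwartzMap hU' with hUdef
  have hU : ∀ x, U x = (u₁ x : ℂ) := fun x => rfl
  have hu0 : ∀ x ∉ Ω, u₁ x = 0 := fun x hx =>
    image_eq_zero_of_notMem_tsupport fun h => hx (huΩ h)
  have hd : 1 ≤ Module.finrank ℝ (EuclideanSpace ℝ (Fin n)) := by simpa using hn
  simp_rw [integral_theta2 hn hs Ω u₁ U hU hu0]
  rw [← Finset.mul_sum, sum_integral_norm_rpow_mul_lineDeriv _ hd hs (by simpa using hns)]
  have hF' : ∫ x, (‖x‖ ^ 2) ^ (s - 1) * realPair (schwartzT U) (schwartzT U) x ≤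
      lam1 ^ ((s - 1) / s) := by
    refine le_trans (le_of_eq ?_) hF
    refine integral_congr_ae (ae_of_all _ fun y => ?_)
    have e : ‖y‖ ^ (2 * (s - 1)) = (‖y‖ ^ 2) ^ (s - 1) :=
      mod_cast Real.rpow_natCast_mul (norm_nonneg y) 2 (s - 1)
    simp only [realPair_apply, real_inner_self_eq_norm_sq, schwartzT_apply, e]
    rfl
  rw [finrank_euclideanSpace_fin]
  have := mul_le_mul_of_nonneg_left hF' (show 0 ≤ s * ((n : ℝ) + 2 * s - 2) from
    mul_nonneg hs.le (by linarith))
  linarith
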